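/- Let 𝔨 be a finite-dimensional real Lie algebra, K₀ ⊆ 𝔨 a Lie subalgebra, and V ⊆ 𝔨 a linear subspace such that ⁅Z, Y⁆ ∈ V + K₀ for every Z ∈ K₀ and every Y ∈ V, and define K_j as in the Killing filtration; assume moreover that ⋂_{j≥0} K_j = {0}. Let F : 𝔨 → 𝔨 be a Lie algebra automorphism such that F(K₀) ⊆ K₀, F(Y) − Y ∈ K₀ for every Y ∈ V, and such that for every W ∈ 𝔨 the orbit {Fⁿ(W) : n ∈ ℕ} is bounded (with respect to some, equivalently any, norm on 𝔨). Then F(Y) = Y for every Y ∈ V. -/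

import Mathlib

/-- The Killing filtration: `K 0 = K₀` and
`K (j+1) = {Z ∈ K₀ : ⁅Z, Y⁆ ∈ K j for all Y ∈ V}`. -/
def killingFiltration (𝔨 : Type*) [LieRing 𝔨] [LieAlgebra ℝ 𝔨]
    (K₀ : LieSubalgebra ℝ 𝔨) (V : Submodule ℝ 𝔨) : ℕ → Submodule ℝ 𝔨
  | 0 => K₀.toSubmodule
  | (j + 1) =>
    { carrier := {Z | Z ∈ K₀ ∧ ∀ Y ∈ V, ⁅Z, Y⁆ ∈ killingFiltration 𝔨 K₀ V j}
      add_mem' := by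
        rintro a b ⟨ha, ha'⟩ ⟨hb, hb'⟩
        refine ⟨K₀.add_mem ha hb, fun Y hY => ?_⟩
        rw [add_lie]
        exact (killingFiltration 𝔨 K₀ V j).add_mem (ha' Y hY) (hb' Y hY)
      zero_mem' := by
        refine ⟨K₀.zero_mem, fun Y hY => ?_⟩
        rw [zero_lie]
        exact (killingFiltration 𝔨 K₀ V j).zero_mem
      smul_mem' := by
        rintro c a ⟨ha, ha'⟩
        refine ⟨K₀.smul_mem c ha, fun Y hY => ?_⟩
        rw [smul_lie]
        exact (killingFiltration 𝔨 K₀ V j).smul_mem c (ha' Y hY) }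

/-!
The filtration satisfies `⁅K_j, K₀⁆ ⊆ K_j`, so the identity
`⁅F Z - Z, Y⁆ = (F - 1) ⁅Z, Y⁆ - ⁅F Z, F Y - Y⁆` shows inductively that `F - 1` maps `K_j` into
`K_{j+1}`; it also maps `V + K₀` into `K_0`. Once the filtration reaches zero, `F - 1` is therefore
nilpotent on `V + K₀`. If `F` fixes `F x - x`, then `Fⁿ x = x + n (F x - x)` is bounded only if
`F x = x`, so by induction on the order of nilpotency every bounded orbit in `V + K₀` is constant.
-/

theorem exists_eq_iInf_of_antitone {α : Type*} [CompleteLattice α] [WellFoundedLT α] {f : ℕ → α}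
    (hf : Antitone f) : ∃ n, f n = ⨅ i, f i :=
  ⟨_, (WellFoundedGT.iSup_eq_monotonicSequenceLimit (α := αᵒᵈ) ⟨f, hf⟩).symm⟩

section BoundedOrbits

theorem iterate_eq_add_nsmul_of_map_sub_eq {A G : Type*} [AddCommGroup A] [FunLike G A A]
    [AddMonoidHomClass G A A] {f : G} {x : A} (hx : f (f x - x) = f x - x) (n : ℕ) :
    f^[n] x = x + n • (f x - x) := by
  induction n with
  | zero => simp only [Function.iterate_zero_apply, zero_nsmul, add_zero]
  | succ n ih =>
    rw [Function.iterate_succ_apply', ih, map_add, map_nsmul, hx, succ_nsmul]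
    abel

theorem bddAbove_orbit_map_sub {A G P : Type*} [AddCommGroup A] [FunLike G A A]
    [AddMonoidHomClass G A A] [FunLike P A ℝ] [AddGroupSeminormClass P A ℝ] {f : G} {p : P} {x : A}
    (hb : BddAbove (Set.range fun n ↦ p (f^[n] x))) :
    BddAbove (Set.range fun n ↦ p (f^[n] (f x - x))) := by
  obtain ⟨C, hC⟩ := hb
  rw [mem_upperBounds, Set.forall_mem_range] at hC
  refine ⟨C + C, Set.forall_mem_range.2 fun n ↦ ?_⟩
  calc p (f^[n] (f x - x)) = p (f^[n + 1] x - f^[n] x) := by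
        rw [iterate_map_sub, Function.iterate_succ_apply]
    _ ≤ p (f^[n + 1] x) + p (f^[n] x) := map_sub_le_add p _ _
    _ ≤ C + C := add_le_add (hC (n + 1)) (hC n)

variable {E : Type*} [AddCommGroup E] [Module ℝ E] {p : Seminorm ℝ E} {x : E}

theorem seminorm_map_sub_eq_zero_of_bddAbove_orbit {G : Type*} [FunLike G E E]
    [AddMonoidHomClass G E E] {f : G} (hx : f (f x - x) = f x - x)
    (hb : BddAbove (Set.range fun n ↦ p (f^[n] x))) : p (f x - x) = 0 := by
  obtain ⟨C, hC⟩ := hb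
  rw [mem_upperBounds, Set.forall_mem_range] at hC
  have linear_growth (n : ℕ) : n • p (f x - x) ≤ C + p x :=
    calc n • p (f x - x) = p (f^[n] x - x) := by
          rw [iterate_eq_add_nsmul_of_map_sub_eq hx, add_sub_cancel_left,
            ← Nat.cast_smul_eq_nsmul ℝ n (f x - x), map_smul_eq_mul, Real.norm_natCast,
            nsmul_eq_mul]
      _ ≤ p (f^[n] x) + p x := map_sub_le_add p _ _
      _ ≤ C + p x := by gcongr; exact hC n
  by_contra hne
  obtain ⟨n, hn⟩ := exists_lt_nsmul ((apply_nonneg p _).lt_of_ne' hne) (C + p x)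
  exact (linear_growth n).not_gt hn

theorem map_eq_self_of_mem_maxGenEigenspace_one {f : Module.End ℝ E}
    (hp : ∀ y, p y = 0 → y = 0) (hx : x ∈ f.maxGenEigenspace 1)
    (hb : BddAbove (Set.range fun n ↦ p (f^[n] x))) : f x = x := by
  obtain ⟨k, hk⟩ := (f.mem_maxGenEigenspace 1 x).1 hx
  rw [one_smul] at hk
  clear hx
  induction k generalizing x with
  | zero =>
    have x_eq_zero : x = 0 := hk
    rw [x_eq_zero, map_zero]
  | succ k ih =>
    have fixed_sub : f (f x - x) = f x - x := by
      refine ih (bddAbove_orbit_map_sub hb) ?_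
      rwa [pow_succ, Module.End.mul_apply] at hk
    exact sub_eq_zero.1 (hp _ (seminorm_map_sub_eq_zero_of_bddAbove_orbit fixed_sub hb))

end BoundedOrbits

theorem map_sub_mem_of_mem_sup {R M : Type*} [Ring R] [AddCommGroup M] [Module R M]
    {f : Module.End R M} {V K : Submodule R M} (hK : ∀ z ∈ K, f z ∈ K)
    (hV : ∀ y ∈ V, f y - y ∈ K) {w : M} (hw : w ∈ V ⊔ K) : f w - w ∈ K := by
  obtain ⟨y, hy, z, hz, rfl⟩ := Submodule.mem_sup.1 hw
  rw [map_add, add_sub_add_comm]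
  exact add_mem (hV y hy) (sub_mem (hK z hz) hz)

theorem lie_map_sub_self {R L : Type*} [CommRing R] [LieRing L] [LieAlgebra R L]
    (F : L →ₗ⁅R⁆ L) (Z Y : L) :
    ⁅F Z - Z, Y⁆ = (F ⁅Z, Y⁆ - ⁅Z, Y⁆) - ⁅F Z, F Y - Y⁆ := by
  rw [LieHom.map_lie, sub_lie, lie_sub]
  abel

section KillingFiltration

variable {𝔨 : Type*} [LieRing 𝔨] [LieAlgebra ℝ 𝔨] {K₀ : LieSubalgebra ℝ 𝔨} {V : Submodule ℝ 𝔨}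

theorem mem_killingFiltration_succ {j : ℕ} {Z : 𝔨} :
    Z ∈ killingFiltration 𝔨 K₀ V (j + 1) ↔
      Z ∈ K₀ ∧ ∀ Y ∈ V, ⁅Z, Y⁆ ∈ killingFiltration 𝔨 K₀ V j :=
  Iff.rfl

variable (K₀ V) in
theorem killingFiltration_antitone : Antitone (killingFiltration 𝔨 K₀ V) := by
  refine antitone_nat_of_succ_le fun j ↦ ?_
  induction j with
  | zero => exact fun Z hZ ↦ hZ.1
  | succ j ih => exact fun Z hZ ↦ ⟨hZ.1, fun Y hY ↦ ih (hZ.2 Y hY)⟩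

theorem exists_killingFiltration_eq_bot [IsArtinian ℝ 𝔨]
    (hcap : ⨅ j, killingFiltration 𝔨 K₀ V j = ⊥) : ∃ m, killingFiltration 𝔨 K₀ V m = ⊥ :=
  hcap ▸ exists_eq_iInf_of_antitone (killingFiltration_antitone K₀ V)

theorem lie_mem_killingFiltration (hbr : ∀ Z ∈ K₀, ∀ Y ∈ V, ⁅Z, Y⁆ ∈ V ⊔ K₀.toSubmodule)
    {j : ℕ} {Z W : 𝔨} (hZ : Z ∈ killingFiltration 𝔨 K₀ V j) (hW : W ∈ K₀) :
    ⁅Z, W⁆ ∈ killingFiltration 𝔨 K₀ V j := by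
  induction j generalizing Z W with
  | zero => exact K₀.lie_mem hZ hW
  | succ j ih =>
    have hZj : Z ∈ killingFiltration 𝔨 K₀ V j := killingFiltration_antitone K₀ V j.le_succ hZ
    rw [mem_killingFiltration_succ] at hZ ⊢
    refine ⟨K₀.lie_mem hZ.1 hW, fun Y hY ↦ ?_⟩
    obtain ⟨A, hA, B, hB, hAB⟩ := Submodule.mem_sup.1 (hbr W hW Y hY)
    have lie_Z_mem : ⁅Z, ⁅W, Y⁆⁆ ∈ killingFiltration 𝔨 K₀ V j := by
      rw [← hAB, lie_add]
      exact add_mem (hZ.2 A hA) (ih hZj hB)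
    have lie_W_mem : ⁅W, ⁅Z, Y⁆⁆ ∈ killingFiltration 𝔨 K₀ V j := by
      rw [← lie_skew]
      exact neg_mem (ih (hZ.2 Y hY) hW)
    rw [lie_lie]
    exact sub_mem lie_Z_mem lie_W_mem

variable {F : 𝔨 →ₗ⁅ℝ⁆ 𝔨}

theorem map_sub_mem_killingFiltration_succ
    (hbr : ∀ Z ∈ K₀, ∀ Y ∈ V, ⁅Z, Y⁆ ∈ V ⊔ K₀.toSubmodule) (hF0 : ∀ Z ∈ K₀, F Z ∈ K₀)
    (hFV : ∀ Y ∈ V, F Y - Y ∈ K₀) {j : ℕ} {Z : 𝔨} (hZ : Z ∈ killingFiltration 𝔨 K₀ V j) :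
    F Z - Z ∈ killingFiltration 𝔨 K₀ V (j + 1) := by
  induction j generalizing Z with
  | zero =>
    refine mem_killingFiltration_succ.2 ⟨sub_mem (hF0 Z hZ) hZ, fun Y hY ↦ ?_⟩
    rw [lie_map_sub_self]
    exact sub_mem (map_sub_mem_of_mem_sup (f := (F : 𝔨 →ₗ[ℝ] 𝔨)) hF0 hFV (hbr Z hZ Y hY))
      (K₀.lie_mem (hF0 Z hZ) (hFV Y hY))
  | succ j ih =>
    have hFZ : F Z ∈ killingFiltration 𝔨 K₀ V (j + 1) :=
      sub_add_cancel (F Z) Z ▸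
        add_mem (ih (killingFiltration_antitone K₀ V j.le_succ hZ)) hZ
    rw [mem_killingFiltration_succ] at hZ
    refine mem_killingFiltration_succ.2 ⟨sub_mem (hF0 Z hZ.1) hZ.1, fun Y hY ↦ ?_⟩
    rw [lie_map_sub_self]
    exact sub_mem (ih (hZ.2 Y hY)) (lie_mem_killingFiltration hbr hFZ (hFV Y hY))

theorem sub_one_pow_succ_apply_mem_killingFiltration
    (hbr : ∀ Z ∈ K₀, ∀ Y ∈ V, ⁅Z, Y⁆ ∈ V ⊔ K₀.toSubmodule) (hF0 : ∀ Z ∈ K₀, F Z ∈ K₀)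
    (hFV : ∀ Y ∈ V, F Y - Y ∈ K₀) {W : 𝔨} (hW : W ∈ V ⊔ K₀.toSubmodule) (j : ℕ) :
    (((F : 𝔨 →ₗ[ℝ] 𝔨) - 1 : Module.End ℝ 𝔨) ^ (j + 1)) W ∈ killingFiltration 𝔨 K₀ V j := by
  induction j with
  | zero =>
    rw [zero_add, pow_one]
    exact map_sub_mem_of_mem_sup (f := (F : 𝔨 →ₗ[ℝ] 𝔨)) hF0 hFV hW
  | succ j ih =>
    rw [pow_succ', Module.End.mul_apply]
    exact map_sub_mem_killingFiltration_succ hbr hF0 hFV ih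

theorem sup_le_maxGenEigenspace_one (hbr : ∀ Z ∈ K₀, ∀ Y ∈ V, ⁅Z, Y⁆ ∈ V ⊔ K₀.toSubmodule)
    (hF0 : ∀ Z ∈ K₀, F Z ∈ K₀) (hFV : ∀ Y ∈ V, F Y - Y ∈ K₀) {m : ℕ}
    (hm : killingFiltration 𝔨 K₀ V m = ⊥) :
    V ⊔ K₀.toSubmodule ≤ Module.End.maxGenEigenspace (F : 𝔨 →ₗ[ℝ] 𝔨) 1 := by
  intro W hW
  refine (Module.End.mem_maxGenEigenspace _ _ _).2 ⟨m + 1, ?_⟩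
  rw [one_smul, ← Submodule.mem_bot ℝ, ← hm]
  exact sub_one_pow_succ_apply_mem_killingFiltration hbr hF0 hFV hW m

end KillingFiltration

theorem fix_of_bounded_orbits_general {𝔨 : Type*} [LieRing 𝔨] [LieAlgebra ℝ 𝔨]
    {K₀ : LieSubalgebra ℝ 𝔨} {V : Submodule ℝ 𝔨}
    (hbr : ∀ Z ∈ K₀, ∀ Y ∈ V, ⁅Z, Y⁆ ∈ V ⊔ K₀.toSubmodule)
    {m : ℕ} (hm : killingFiltration 𝔨 K₀ V m = ⊥) {F : 𝔨 →ₗ⁅ℝ⁆ 𝔨}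
    (hF0 : ∀ Z ∈ K₀, F Z ∈ K₀) (hFV : ∀ Y ∈ V, F Y - Y ∈ K₀)
    {p : Seminorm ℝ 𝔨} (hp : ∀ X, p X = 0 → X = 0)
    {W : 𝔨} (hW : W ∈ V ⊔ K₀.toSubmodule)
    (hbdd : BddAbove (Set.range fun n ↦ p (F^[n] W))) : F W = W :=
  map_eq_self_of_mem_maxGenEigenspace_one (f := (F : 𝔨 →ₗ[ℝ] 𝔨)) hp
    (sup_le_maxGenEigenspace_one hbr hF0 hFV hm hW) hbdd

/-- if `⋂ K_j = {0}`, `F` is a Lie algebra automorphism with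
`F(K₀) ⊆ K₀`, `F(Y) − Y ∈ K₀` for `Y ∈ V`, and all orbits of `F` are bounded
with respect to some (equivalently, any) norm `N` on `𝔨`, then `F` is the
identity on `V`. -/
theorem fix_of_bounded_orbits {𝔨 : Type*} [LieRing 𝔨] [LieAlgebra ℝ 𝔨]
    [FiniteDimensional ℝ 𝔨]
    (K₀ : LieSubalgebra ℝ 𝔨) (V : Submodule ℝ 𝔨)
    (hbr : ∀ Z ∈ K₀, ∀ Y ∈ V, ⁅Z, Y⁆ ∈ V ⊔ K₀.toSubmodule)
    (hcap : (⨅ j : ℕ, killingFiltration 𝔨 K₀ V j) = ⊥)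
    (F : 𝔨 ≃ₗ⁅ℝ⁆ 𝔨)
    (hF0 : ∀ Z ∈ K₀, F Z ∈ K₀)
    (hFV : ∀ Y ∈ V, F Y - Y ∈ K₀)
    -- a norm on the vector space `𝔨`
    (N : 𝔨 → ℝ)
    (hN0 : ∀ x : 𝔨, N x = 0 ↔ x = 0)
    (hNadd : ∀ x y : 𝔨, N (x + y) ≤ N x + N y)
    (hNsmul : ∀ (c : ℝ) (x : 𝔨), N (c • x) = |c| * N x)
    -- every orbit of `F` is bounded with respect to the norm `N`
    (hbdd : ∀ W : 𝔨, ∃ C : ℝ, ∀ n : ℕ, N ((⇑F)^[n] W) ≤ C) :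
    ∀ Y ∈ V, F Y = Y := by
  obtain ⟨m, hm⟩ := exists_killingFiltration_eq_bot hcap
  exact fun Y hY ↦ fix_of_bounded_orbits_general (F := F.toLieHom) (p := .of N hNadd hNsmul)
    hbr hm hF0 hFV (fun X ↦ (hN0 X).1) (Submodule.mem_sup_left hY)
    ((hbdd Y).imp fun _ ↦ Set.forall_mem_range.2)
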